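/- Let Ω ⊆ ℝ^d be open. Then 𝒢^∞(Ω) = 𝒢^{L,0}(Ω), and this set is closed in 𝒢(Ω) with respect to the sharp topology. -/

import Mathlib

open Filter MeasureTheory Metric Set
open scoped Topology BigOperators

noncomputable section

/-- Euclidean space ℝ^d. -/
abbrev Euc (d : ℕ) : Type := EuclideanSpace ℝ (Fin d)

variable {d : ℕ}

/-- "P ε holds for small ε". -/
def SmallE (P : ℝ → Prop) : Prop :=
  ∃ ε₀ : ℝ, 0 < ε₀ ∧ ∀ ε : ℝ, 0 < ε → ε < ε₀ → P ε

/-- Directional derivative ∂ₑ u in the direction e. -/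
def pderivDir {F : Type} [NormedAddCommGroup F] [NormedSpace ℝ F]
    (e : Euc d) (u : Euc d → F) : Euc d → F :=
  fun x => fderiv ℝ u x e

/-- Multi-index partial derivative ∂^α u. -/
def partialDeriv {F : Type} [NormedAddCommGroup F] [NormedSpace ℝ F]
    (α : Fin d → ℕ) (u : Euc d → F) : Euc d → F :=
  (List.finRange d).foldr
    (fun i v => (pderivDir (EuclideanSpace.single i (1 : ℝ)))^[α i] v) u

/-- p_{α,K}(u) = sup_{x ∈ K} |∂^α u(x)|. -/
def pSemi {F : Type} [NormedAddCommGroup F] [NormedSpace ℝ F]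
    (α : Fin d → ℕ) (K : Set (Euc d)) (u : Euc d → F) : ℝ :=
  sSup ((fun x => ‖partialDeriv α u x‖) '' K)

/-- p_{k,K}(u) = max_{|α| = k} p_{α,K}(u). -/
def pSemiK {F : Type} [NormedAddCommGroup F] [NormedSpace ℝ F]
    (k : ℕ) (K : Set (Euc d)) (u : Euc d → F) : ℝ :=
  sSup {y : ℝ | ∃ α : Fin d → ℕ, (∑ i, α i) = k ∧ y = pSemi α K u}

/-- Moderate nets of smooth functions on Ω. -/
def Moderate (Ω : Set (Euc d)) (u : ℝ → Euc d → ℂ) : Prop :=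
  (∀ ε ∈ Set.Ioo (0:ℝ) 1, ContDiffOn ℝ (⊤ : ℕ∞) (u ε) Ω) ∧
  ∀ K : Set (Euc d), IsCompact K → K ⊆ Ω → ∀ α : Fin d → ℕ,
    ∃ N : ℕ, SmallE fun ε => pSemi α K (u ε) ≤ ε ^ (-(N : ℝ))

/-- Negligible nets of smooth functions on Ω. -/
def Negligible (Ω : Set (Euc d)) (u : ℝ → Euc d → ℂ) : Prop :=
  (∀ ε ∈ Set.Ioo (0:ℝ) 1, ContDiffOn ℝ (⊤ : ℕ∞) (u ε) Ω) ∧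
  ∀ K : Set (Euc d), IsCompact K → K ⊆ Ω → ∀ α : Fin d → ℕ, ∀ m : ℕ,
    SmallE fun ε => pSemi α K (u ε) ≤ ε ^ (m : ℝ)

/-- The algebra of moderate nets. -/
abbrev ModNet (Ω : Set (Euc d)) : Type := {u : ℝ → Euc d → ℂ // Moderate Ω u}

/-- Two moderate nets are identified when their difference is negligible. -/
def nulRel (Ω : Set (Euc d)) (u v : ModNet Ω) : Prop :=
  Negligible Ω (fun ε x => u.1 ε x - v.1 ε x)

/-- The special Colombeau algebra 𝒢(Ω). -/
abbrev Colombeau (Ω : Set (Euc d)) : Type := Quot (nulRel Ω)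

/-- The valuation of a net of complex numbers, with values in EReal
(⊤ corresponding to nets with arbitrarily good decay). -/
def valuation (z : ℝ → ℂ) : EReal :=
  sSup ((fun b : ℝ => (b : EReal)) '' {b : ℝ | SmallE fun ε => ‖z ε‖ ≤ ε ^ b})

/-- The sharp norm e^{-v(z)} of a net of complex numbers. -/
def sharpNorm (z : ℝ → ℂ) : ℝ :=
  if valuation z = ⊤ then 0 else Real.exp (-(valuation z).toReal)

/-- P_{k,K}(u) = ‖(p_{k,K}(u_ε))_ε‖ (computed via a representative;
independent of the representative). -/
def PNorm (Ω : Set (Euc d)) (k : ℕ) (K : Set (Euc d)) (u : Colombeau Ω) : ℝ :=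
  sharpNorm fun ε => ((pSemiK k K ((Quot.out u).1 ε) : ℝ) : ℂ)

/-- P_{α,K}(u) = ‖(p_{α,K}(u_ε))_ε‖ for a multi-index α. -/
def PNormA (Ω : Set (Euc d)) (α : Fin d → ℕ) (K : Set (Euc d)) (u : Colombeau Ω) : ℝ :=
  sharpNorm fun ε => ((pSemi α K ((Quot.out u).1 ε) : ℝ) : ℂ)

/-- The ultra-pseudo-seminorm P_{α,K} applied to the difference u - v. -/
def PNormDiff (Ω : Set (Euc d)) (α : Fin d → ℕ) (K : Set (Euc d))
    (u v : Colombeau Ω) : ℝ :=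
  sharpNorm fun ε =>
    ((pSemi α K (fun x => (Quot.out u).1 ε x - (Quot.out v).1 ε x) : ℝ) : ℂ)

/-- The sharp topology on 𝒢(Ω): generated by the balls of the
ultra-pseudo-seminorms P_{α,K}. -/
def sharpTopology (Ω : Set (Euc d)) : TopologicalSpace (Colombeau Ω) :=
  TopologicalSpace.generateFrom
    {S | ∃ (u : Colombeau Ω) (α : Fin d → ℕ) (K : Set (Euc d)) (r : ℝ),
      IsCompact K ∧ K ⊆ Ω ∧ 0 < r ∧ S = {v | PNormDiff Ω α K u v < r}}

/-- K satisfies the segment condition: there is r > 0 such that every x ∈ K lies on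
d line segments of length r, in linearly independent (unit) directions, contained in K. -/
def SegmentCond (K : Set (Euc d)) : Prop :=
  ∃ r : ℝ, 0 < r ∧ ∀ x ∈ K, ∃ e : Fin d → Euc d, LinearIndependent ℝ e ∧
    ∀ i : Fin d, ‖e i‖ = 1 ∧ ∃ a : ℝ, a ≤ 0 ∧ 0 ≤ a + r ∧
      ∀ t : ℝ, a ≤ t → t ≤ a + r → x + t • e i ∈ K

/-- 𝒢^∞(K). -/
def GInfK (Ω : Set (Euc d)) (K : Set (Euc d)) : Set (Colombeau Ω) :=
  {u | ∃ v : ModNet Ω, Quot.mk (nulRel Ω) v = u ∧ ∃ N : ℕ,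
    ∀ α : Fin d → ℕ, SmallE fun ε => pSemi α K (v.1 ε) ≤ ε ^ (-(N : ℝ))}

/-- 𝒢^{L,a}(K), the generalized functions of sublinear growth with slope
smaller than a on K. -/
def GLaK (Ω : Set (Euc d)) (a : ℝ) (K : Set (Euc d)) : Set (Colombeau Ω) :=
  {u | ∃ v : ModNet Ω, Quot.mk (nulRel Ω) v = u ∧ ∃ a' : ℝ, a' < a ∧ ∃ b : ℝ,
    ∀ α : Fin d → ℕ,
      SmallE fun ε => pSemi α K (v.1 ε) ≤ ε ^ (-(a' * (∑ i, (α i : ℝ))) - b)}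

/-- 𝒢^{L,0}(K) = ⋂_{a>0} 𝒢^{L,a}(K). -/
def GL0K (Ω : Set (Euc d)) (K : Set (Euc d)) : Set (Colombeau Ω) :=
  {u | ∀ a : ℝ, 0 < a → u ∈ GLaK Ω a K}

/-- 𝒢^∞(Ω) = ⋂_{K⊂⊂Ω} 𝒢^∞(K). -/
def GInfOmega (Ω : Set (Euc d)) : Set (Colombeau Ω) :=
  {u | ∀ K : Set (Euc d), IsCompact K → K ⊆ Ω → u ∈ GInfK Ω K}

/-- 𝒢^{L,a}(Ω) = ⋂_{K⊂⊂Ω} 𝒢^{L,a}(K). -/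
def GLaOmega (Ω : Set (Euc d)) (a : ℝ) : Set (Colombeau Ω) :=
  {u | ∀ K : Set (Euc d), IsCompact K → K ⊆ Ω → u ∈ GLaK Ω a K}

/-- 𝒢^{L,0}(Ω) = ⋂_{K⊂⊂Ω} 𝒢^{L,0}(K). -/
def GL0Omega (Ω : Set (Euc d)) : Set (Colombeau Ω) :=
  {u | ∀ K : Set (Euc d), IsCompact K → K ⊆ Ω → u ∈ GL0K Ω K}

/-- u ∈ 𝒢(Ω) is sublinear. -/
def Sublinear (Ω : Set (Euc d)) (u : Colombeau Ω) : Prop :=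
  ∃ v : ModNet Ω, Quot.mk (nulRel Ω) v = u ∧
    ∀ K : Set (Euc d), IsCompact K → K ⊆ Ω →
      ∀ x : ℝ → Euc d, (∀ ε ∈ Set.Ioo (0:ℝ) 1, x ε ∈ K) →
        ∃ k : ℝ, ∃ p : ℕ → ℝ,
          Filter.Tendsto (fun n : ℕ => p n + k * n) atTop atTop ∧
          ∀ α : Fin d → ℕ,
            SmallE fun ε => ‖partialDeriv α (v.1 ε) (x ε)‖ ≤ ε ^ (p (∑ i, α i))

/-- The scaled mollifier ψ_δ(x) = δ^{-d} ψ(x/δ). -/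
def mollify (ψ : Euc d → ℝ) (δ : ℝ) : Euc d → ℝ :=
  fun x => ((δ : ℝ) ^ d)⁻¹ * ψ (δ⁻¹ • x)

/-- Convolution u ⋆ ψ (with a real-valued kernel ψ). -/
def conv (u : Euc d → ℂ) (ψ : Euc d → ℝ) : Euc d → ℂ :=
  fun x => ∫ t : Euc d, u (x - t) * ((ψ t : ℝ) : ℂ)

/-- 𝒢_c(Ω): compactly supported generalized functions (restriction to Ω∖K
is 0 in 𝒢(Ω∖K), i.e. some representative is negligible on Ω∖K). -/
def GCompact (Ω : Set (Euc d)) : Set (Colombeau Ω) :=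
  {u | ∃ v : ModNet Ω, Quot.mk (nulRel Ω) v = u ∧
    ∃ K : Set (Euc d), IsCompact K ∧ K ⊆ Ω ∧ Negligible (Ω \ K) v.1}

/-!
A smooth `f` satisfies Landau's inequality `‖f'‖ ≤ 2 A / h + h B` on an interval of length `h` where
`‖f‖ ≤ A` and `‖f''‖ ≤ B`. Taking `h = ε ^ s`, which is eventually so short that the segment stays
near `K`, shows that the growth exponents `E k` of the successive derivatives of a net in a
coordinate direction satisfy `E (k + 1) ≤ max (E k) ((E k + E (k + 2)) / 2)`: as soon as `E`
increases once, it keeps increasing at least linearly. A net in `𝒢^{L,0}` has `E k ≤ a k + b` for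
every `a > 0`, so `E` is antitone and all derivatives grow at most as fast as the net itself. Hence
`𝒢^∞(Ω)` and `𝒢^{L,0}(Ω)` are both described by the inequalities `E_{α,K} ≤ E_{0,K}`, and these
define a closed set because the growth exponents are locally constant in the sharp topology.
-/

section Calculus

variable {E F : Type*} [NormedAddCommGroup F] [NormedSpace ℝ F]

theorem norm_deriv_le_of_norm_le_of_norm_deriv2_le {f f' f'' : ℝ → F} {h A B : ℝ} (hh : 0 < h)
    (hf : ∀ t ∈ Icc 0 h, HasDerivAt f (f' t) t) (hf' : ∀ t ∈ Icc 0 h, HasDerivAt f' (f'' t) t)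
    (hA : ∀ t ∈ Icc 0 h, ‖f t‖ ≤ A) (hB : ∀ t ∈ Icc 0 h, ‖f'' t‖ ≤ B) :
    ‖f' 0‖ ≤ 2 / h * A + h * B := by
  have h0 : (0 : ℝ) ∈ Icc 0 h := left_mem_Icc.2 hh.le
  have hh' : h ∈ Icc 0 h := right_mem_Icc.2 hh.le
  have hBnonneg : 0 ≤ B := (norm_nonneg _).trans (hB 0 h0)
  have deriv_bound : ∀ t ∈ Icc 0 h, ‖f' t - f' 0‖ ≤ B * h := fun t ht =>
    calc ‖f' t - f' 0‖ ≤ B * ‖t - 0‖ :=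
          (convex_Icc 0 h).norm_image_sub_le_of_norm_hasDerivWithin_le
            (fun t ht => (hf' t ht).hasDerivWithinAt) hB h0 ht
      _ ≤ B * h := by rw [sub_zero, Real.norm_of_nonneg ht.1]; gcongr; exact ht.2
  have linear_bound : ‖(f h - h • f' 0) - (f 0 - (0 : ℝ) • f' 0)‖ ≤ B * h * ‖h - 0‖ :=
    (convex_Icc 0 h).norm_image_sub_le_of_norm_hasDerivWithin_le
      (f := fun t => f t - t • f' 0) (f' := fun t => f' t - f' 0)
      (fun t ht => by
        have remainder := (hf t ht).sub ((hasDerivAt_id t).smul_const (f' 0))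
        rw [one_smul] at remainder
        exact remainder.hasDerivWithinAt)
      deriv_bound h0 hh'
  have scaled : h * ‖f' 0‖ ≤ A + A + B * h * h := by
    calc h * ‖f' 0‖ = ‖f h - f 0 - ((f h - h • f' 0) - (f 0 - (0 : ℝ) • f' 0))‖ := by
          rw [← Real.norm_of_nonneg hh.le, ← norm_smul, Real.norm_of_nonneg hh.le]
          congr 1
          module
      _ ≤ ‖f h‖ + ‖f 0‖ + ‖(f h - h • f' 0) - (f 0 - (0 : ℝ) • f' 0)‖ :=
          (norm_sub_le _ _).trans (add_le_add_left (norm_sub_le _ _) _)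
      _ ≤ A + A + B * h * h := by
          rw [sub_zero, Real.norm_of_nonneg hh.le] at linear_bound
          exact add_le_add (add_le_add (hA h hh') (hA 0 h0)) linear_bound
  calc ‖f' 0‖ ≤ (A + A + B * h * h) / h := (le_div_iff₀' hh).2 scaled
    _ = 2 / h * A + h * B := by field_simp; ring

theorem antitone_of_le_max_midpoint_of_sublinear {e : ℕ → ℝ}
    (hmid : ∀ k, e (k + 1) ≤ max (e k) ((e k + e (k + 2)) / 2))
    (hlin : ∀ a, 0 < a → ∃ b, ∀ k : ℕ, e k ≤ a * k + b) : Antitone e := by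
  refine antitone_nat_of_succ_le fun k => ?_
  by_contra! hlt
  set δ := e (k + 1) - e k
  have hδpos : 0 < δ := sub_pos.2 hlt
  have increment_ge : ∀ m : ℕ, δ ≤ e (k + m + 1) - e (k + m) := by
    intro m
    induction m with
    | zero => rfl
    | succ m ih =>
      rcases le_max_iff.1 (hmid (k + m)) with h | h
      · linarith
      · rw [← add_assoc k m 1]
        linarith
  have linear_lower_bound : ∀ m : ℕ, e k + m * δ ≤ e (k + m) := by
    intro m
    induction m with
    | zero => simp
    | succ m ih =>
      have := increment_ge m
      push_cast
      rw [← add_assoc k m 1]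
      linarith
  obtain ⟨b, hb⟩ := hlin (δ / 2) (half_pos hδpos)
  obtain ⟨m, hm⟩ := exists_nat_gt ((δ / 2 * k + b - e k) / (δ / 2))
  rw [div_lt_iff₀ (half_pos hδpos)] at hm
  have upper := hb (k + m)
  have lower := linear_lower_bound m
  push_cast at upper
  linarith

theorem eventually_forall_mem_Icc_add_smul {ι : Type*} {l : Filter ι} {τ : ι → ℝ}
    (hτ : Tendsto τ l (𝓝 0)) {K : Set F} (hK : IsCompact K) (e : F) {P : ι × F → Prop}
    (hP : ∀ᶠ p in l ×ˢ 𝓝ˢ K, P p) :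
    ∀ᶠ p in l ×ˢ 𝓝ˢ K, ∀ t ∈ Icc 0 (τ p.1), P (p.1, p.2 + t • e) := by
  have shift : Tendsto (fun q : F × ℝ => q.1 + q.2 • e) (𝓝ˢ K ×ˢ 𝓝 0) (𝓝ˢ K) := by
    rw [← nhdsSet_singleton, ← hK.nhdsSet_prod_eq isCompact_singleton]
    refine Continuous.tendsto_nhdsSet (by fun_prop) ?_
    rintro ⟨x, t⟩ ⟨hx, rfl⟩
    simpa using hx
  have shifted : ∀ᶠ q in (l ×ˢ 𝓝ˢ K) ×ˢ 𝓝 (0 : ℝ), P (q.1.1, q.1.2 + q.2 • e) :=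
    ((tendsto_fst.comp tendsto_fst).prodMk
      (shift.comp ((tendsto_snd.comp tendsto_fst).prodMk tendsto_snd))).eventually hP
  obtain ⟨P₁, hP₁, P₂, hP₂, hP₁₂⟩ := eventually_prod_iff.1 shifted
  have short : ∀ᶠ i in l, ∀ t ∈ Icc 0 (τ i), P₂ t :=
    (tendsto_const_nhds.Icc hτ).eventually hP₂.smallSets
  filter_upwards [hP₁, short.prod_inl (𝓝ˢ K)] with p hp₁ hp₂ t ht
  exact hP₁₂ hp₁ (hp₂ t ht)

theorem tendsto_rpow_nhdsGT_zero {s : ℝ} (hs : 0 < s) :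
    Tendsto (fun ε : ℝ => ε ^ s) (𝓝[>] 0) (𝓝 0) := by
  simpa [Real.zero_rpow hs.ne'] using
    (Real.continuousAt_rpow_const 0 s (Or.inr hs.le)).tendsto.mono_left nhdsWithin_le_nhds

theorem isBigO_rpow_neg_prod {l : Filter E} {a b : ℝ} (h : a ≤ b) :
    (fun p : ℝ × E => p.1 ^ (-a)) =O[𝓝[>] 0 ×ˢ l] fun p => p.1 ^ (-b) := by
  refine Asymptotics.IsBigO.of_bound' ?_
  filter_upwards [Eventually.prod_inl (Ioo_mem_nhdsGT one_pos) l] with p hp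
  rw [Real.norm_of_nonneg (Real.rpow_nonneg hp.1.le _),
    Real.norm_of_nonneg (Real.rpow_nonneg hp.1.le _)]
  exact Real.rpow_le_rpow_of_exponent_ge hp.1 hp.2.le (neg_le_neg h)

end Calculus

theorem smallE_iff_eventually {P : ℝ → Prop} : SmallE P ↔ ∀ᶠ ε in 𝓝[>] 0, P ε := by
  rw [Filter.Eventually, mem_nhdsGT_iff_exists_Ioo_subset]
  exact exists_congr fun _ =>
    and_congr_right fun _ => ⟨fun h ε hε => h ε hε.1 hε.2, fun h ε h₀ h₁ => h ⟨h₀, h₁⟩⟩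

section PartialDeriv

variable {F : Type} [NormedAddCommGroup F] [NormedSpace ℝ F] {Ω K : Set (Euc d)}
  {f g : Euc d → F} {α : Fin d → ℕ}

/- Stated for families so that relations between several functions, such as `w = f - g`, can be
propagated as well. -/
theorem partialDeriv_induction {ι : Type*} {P : (ι → Euc d → F) → Prop}
    (hP : ∀ e u, P u → P fun j => pderivDir e (u j)) (α : Fin d → ℕ) {u : ι → Euc d → F}
    (hu : P u) : P fun j => partialDeriv α (u j) := by
  unfold partialDeriv
  induction List.finRange d with
  | nil => exact hu
  | cons i l ih =>
    simp only [List.foldr_cons]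
    induction α i with
    | zero => exact ih
    | succ n ihn =>
      simp only [Function.iterate_succ_apply']
      exact hP _ _ ihn

theorem partialDeriv_zero_right (α : Fin d → ℕ) : partialDeriv α (0 : Euc d → F) = 0 :=
  partialDeriv_induction (P := fun u : Unit → Euc d → F => u () = 0)
    (fun e u hu => by funext x; simp [pderivDir, hu]) α (u := fun _ => 0) rfl

theorem contDiffOn_pderivDir (hΩ : IsOpen Ω) (hf : ContDiffOn ℝ (⊤ : ℕ∞) f Ω) (e : Euc d) :
    ContDiffOn ℝ (⊤ : ℕ∞) (pderivDir e f) Ω :=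
  (hf.fderiv_of_isOpen hΩ (by simp)).clm_apply contDiffOn_const

theorem contDiffOn_partialDeriv (hΩ : IsOpen Ω) (hf : ContDiffOn ℝ (⊤ : ℕ∞) f Ω)
    (α : Fin d → ℕ) : ContDiffOn ℝ (⊤ : ℕ∞) (partialDeriv α f) Ω :=
  partialDeriv_induction (P := fun u : Unit → Euc d → F => ContDiffOn ℝ (⊤ : ℕ∞) (u ()) Ω)
    (fun e _ hu => contDiffOn_pderivDir hΩ hu e) α (u := fun _ => f) hf

theorem differentiableAt_partialDeriv (hΩ : IsOpen Ω) (hf : ContDiffOn ℝ (⊤ : ℕ∞) f Ω)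
    (α : Fin d → ℕ) {x : Euc d} (hx : x ∈ Ω) : DifferentiableAt ℝ (partialDeriv α f) x :=
  ((contDiffOn_partialDeriv hΩ hf α).differentiableOn (by simp)).differentiableAt
    (hΩ.mem_nhds hx)

theorem eqOn_pderivDir_of_eqOn_sub (hΩ : IsOpen Ω) (hf : DifferentiableOn ℝ f Ω)
    (hg : DifferentiableOn ℝ g Ω) {w : Euc d → F} (hw : EqOn w (f - g) Ω) (e : Euc d) :
    EqOn (pderivDir e w) (pderivDir e f - pderivDir e g) Ω := fun x hx => by
  have hwx : w =ᶠ[𝓝 x] f - g := hw.eventuallyEq_of_mem (hΩ.mem_nhds hx)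
  simp only [pderivDir, Pi.sub_apply]
  rw [hwx.fderiv_eq, fderiv_sub (hf.differentiableAt (hΩ.mem_nhds hx))
    (hg.differentiableAt (hΩ.mem_nhds hx)), sub_apply]

theorem eqOn_partialDeriv_sub (hΩ : IsOpen Ω) (hf : ContDiffOn ℝ (⊤ : ℕ∞) f Ω)
    (hg : ContDiffOn ℝ (⊤ : ℕ∞) g Ω) (α : Fin d → ℕ) :
    EqOn (partialDeriv α (f - g)) (partialDeriv α f - partialDeriv α g) Ω :=
  (partialDeriv_induction (P := fun u : Fin 3 → Euc d → F =>
      ContDiffOn ℝ (⊤ : ℕ∞) (u 0) Ω ∧ ContDiffOn ℝ (⊤ : ℕ∞) (u 1) Ω ∧ EqOn (u 2) (u 0 - u 1) Ω)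
    (fun e _ ⟨h₀, h₁, h₂⟩ => ⟨contDiffOn_pderivDir hΩ h₀ e, contDiffOn_pderivDir hΩ h₁ e,
      eqOn_pderivDir_of_eqOn_sub hΩ (h₀.differentiableOn (by simp))
        (h₁.differentiableOn (by simp)) h₂ e⟩)
    α (u := ![f, g, f - g]) ⟨hf, hg, fun _ _ => rfl⟩).2.2

/- `partialDeriv` differentiates in the first coordinate last, so the extra derivative in direction
`i` is the outermost one only if `α` vanishes before `i`. -/
theorem partialDeriv_update_succ {i : Fin d} (hα : ∀ j < i, α j = 0) (n : ℕ) (f : Euc d → F) :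
    partialDeriv (Function.update α i (n + 1)) f =
      pderivDir (EuclideanSpace.single i 1) (partialDeriv (Function.update α i n) f) := by
  unfold partialDeriv
  have hsorted := List.pairwise_lt_finRange d
  have hmem := List.mem_finRange i
  generalize List.finRange d = l at hsorted hmem ⊢
  induction l with
  | nil => simp at hmem
  | cons j l ih =>
    obtain ⟨hjl, hl⟩ := List.pairwise_cons.1 hsorted
    simp only [List.foldr_cons]
    rcases eq_or_ne i j with rfl | hij
    · rw [Function.update_self, Function.update_self, Function.iterate_succ_apply']
      congr 2
      refine List.foldr_ext _ _ _ fun k hk _ => ?_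
      rw [Function.update_of_ne (hjl k hk).ne', Function.update_of_ne (hjl k hk).ne']
    · have hil : i ∈ l := List.mem_of_ne_of_mem hij hmem
      rw [Function.update_of_ne hij.symm, Function.update_of_ne hij.symm, hα j (hjl i hil)]
      exact ih hl hil

theorem hasDerivAt_partialDeriv_line (hΩ : IsOpen Ω) (hf : ContDiffOn ℝ (⊤ : ℕ∞) f Ω)
    {i : Fin d} (hα : ∀ j < i, α j = 0) (n : ℕ) {x : Euc d} {t : ℝ}
    (ht : x + t • EuclideanSpace.single i (1 : ℝ) ∈ Ω) :
    HasDerivAt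
      (fun s : ℝ => partialDeriv (Function.update α i n) f (x + s • EuclideanSpace.single i 1))
      (partialDeriv (Function.update α i (n + 1)) f (x + t • EuclideanSpace.single i 1)) t := by
  have line : HasDerivAt (fun s : ℝ => x + s • (EuclideanSpace.single i 1 : Euc d))
      (EuclideanSpace.single i 1) t := by
    simpa using ((hasDerivAt_id t).smul_const (EuclideanSpace.single i 1 : Euc d)).const_add x
  rw [partialDeriv_update_succ hα]
  exact (differentiableAt_partialDeriv hΩ hf _ ht).hasFDerivAt.comp_hasDerivAt t line

theorem norm_partialDeriv_le_pSemi (hΩ : IsOpen Ω) (hK : IsCompact K) (hKΩ : K ⊆ Ω)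
    (hf : ContDiffOn ℝ (⊤ : ℕ∞) f Ω) (α : Fin d → ℕ) {x : Euc d} (hx : x ∈ K) :
    ‖partialDeriv α f x‖ ≤ pSemi α K f :=
  le_csSup (hK.bddAbove_image ((contDiffOn_partialDeriv hΩ hf α).continuousOn.mono hKΩ).norm)
    ⟨x, hx, rfl⟩

theorem pSemi_le {c : ℝ} (hc : 0 ≤ c) (h : ∀ x ∈ K, ‖partialDeriv α f x‖ ≤ c) :
    pSemi α K f ≤ c :=
  Real.sSup_le (forall_mem_image.2 h) hc

theorem pSemi_zero : pSemi α K (0 : Euc d → F) = 0 := by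
  refine le_antisymm (pSemi_le le_rfl fun x _ => ?_) (Real.sSup_nonneg ?_)
  · rw [partialDeriv_zero_right, Pi.zero_apply, norm_zero]
  · exact forall_mem_image.2 fun _ _ => norm_nonneg _

end PartialDeriv

section HasGrowth

variable {F : Type} [NormedAddCommGroup F] [NormedSpace ℝ F] {Ω K L : Set (Euc d)}
  {α : Fin d → ℕ} {u v : ℝ → Euc d → F} {b c : ℝ}

/-- `∂^α u_ε` grows at most like `ε ^ (-c)` as `ε → 0`, uniformly near `K`. The product filter
encodes uniformity on an unspecified neighbourhood of `K`, which leaves room for short segments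
issuing from `K`. -/
def HasGrowth (K : Set (Euc d)) (α : Fin d → ℕ) (c : ℝ) (u : ℝ → Euc d → F) : Prop :=
  (fun p : ℝ × Euc d => partialDeriv α (u p.1) p.2) =O[𝓝[>] 0 ×ˢ 𝓝ˢ K] fun p => p.1 ^ (-c)

theorem HasGrowth.mono (hu : HasGrowth K α b u) (hbc : b ≤ c) : HasGrowth K α c u :=
  Asymptotics.IsBigO.trans hu (isBigO_rpow_neg_prod hbc)

theorem hasGrowth_of_eventually_pSemi_le (hΩ : IsOpen Ω) (hL : IsCompact L) (hLΩ : L ⊆ Ω)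
    (hKL : L ∈ 𝓝ˢ K) (hu : ∀ᶠ ε in 𝓝[>] 0, ContDiffOn ℝ (⊤ : ℕ∞) (u ε) Ω)
    (h : ∀ᶠ ε in 𝓝[>] 0, pSemi α L (u ε) ≤ ε ^ (-c)) : HasGrowth K α c u := by
  refine Asymptotics.IsBigO.of_bound' ?_
  filter_upwards [hu.prod_inl (𝓝ˢ K), h.prod_inl (𝓝ˢ K), Eventually.prod_inr hKL (𝓝[>] 0)]
    with p hup hp hpL
  exact (norm_partialDeriv_le_pSemi hΩ hL hLΩ hup α hpL).trans (hp.trans (le_abs_self _))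

theorem HasGrowth.eventually_pSemi_le (hu : HasGrowth K α b u) (hbc : b < c) :
    ∀ᶠ ε in 𝓝[>] 0, pSemi α K (u ε) ≤ ε ^ (-c) := by
  obtain ⟨C, hC⟩ := hu.bound
  have const_le : ∀ᶠ ε : ℝ in 𝓝[>] 0, C ≤ ε ^ (b - c) :=
    (tendsto_rpow_neg_nhdsGT_zero (sub_neg.2 hbc)).eventually_ge_atTop C
  filter_upwards [hC.curry, const_le, self_mem_nhdsWithin] with ε hε hCε (hpos : 0 < ε)
  refine pSemi_le (Real.rpow_nonneg hpos.le _) fun x hx => (hε.self_of_nhdsSet x hx).trans ?_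
  calc C * ‖ε ^ (-b)‖ ≤ ε ^ (b - c) * ε ^ (-b) := by
        rw [Real.norm_of_nonneg (Real.rpow_nonneg hpos.le _)]
        exact mul_le_mul_of_nonneg_right hCε (Real.rpow_nonneg hpos.le _)
    _ = ε ^ (-c) := by rw [← Real.rpow_add hpos]; ring_nf

theorem hasGrowth_iff_of_hasGrowth_sub (hΩ : IsOpen Ω) (hKΩ : K ⊆ Ω)
    (hu : ∀ᶠ ε in 𝓝[>] 0, ContDiffOn ℝ (⊤ : ℕ∞) (u ε) Ω)
    (hv : ∀ᶠ ε in 𝓝[>] 0, ContDiffOn ℝ (⊤ : ℕ∞) (v ε) Ω)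
    (huv : HasGrowth K α c fun ε => u ε - v ε) : HasGrowth K α c u ↔ HasGrowth K α c v := by
  have sub_eq : (fun p : ℝ × Euc d => partialDeriv α (u p.1 - v p.1) p.2) =ᶠ[𝓝[>] 0 ×ˢ 𝓝ˢ K]
      fun p => partialDeriv α (u p.1) p.2 - partialDeriv α (v p.1) p.2 := by
    filter_upwards [hu.prod_inl (𝓝ˢ K), hv.prod_inl (𝓝ˢ K),
      Eventually.prod_inr (hΩ.mem_nhdsSet.2 hKΩ) (𝓝[>] 0)] with p hup hvp hp
    exact eqOn_partialDeriv_sub hΩ hup hvp α hp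
  have hsub := huv.congr' sub_eq EventuallyEq.rfl
  exact ⟨fun h => (h.sub hsub).congr_left fun _ => sub_sub_cancel _ _,
    fun h => (hsub.add h).congr_left fun _ => sub_add_cancel _ _⟩

theorem HasGrowth.interpolate (hΩ : IsOpen Ω) (hK : IsCompact K) (hKΩ : K ⊆ Ω)
    (hu : ∀ᶠ ε in 𝓝[>] 0, ContDiffOn ℝ (⊤ : ℕ∞) (u ε) Ω) {i : Fin d} (hα : ∀ j < i, α j = 0)
    {n : ℕ} (h₀ : HasGrowth K (Function.update α i n) b u)
    (h₂ : HasGrowth K (Function.update α i (n + 2)) c u) {s : ℝ} (hs : 0 < s) :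
    HasGrowth K (Function.update α i (n + 1)) (max (b + s) (c - s)) u := by
  obtain ⟨C₀, hC₀⟩ := h₀.bound
  obtain ⟨C₂, hC₂⟩ := h₂.bound
  have landau : ∀ᶠ p in 𝓝[>] (0 : ℝ) ×ˢ 𝓝ˢ K,
      ‖partialDeriv (Function.update α i (n + 1)) (u p.1) p.2‖ ≤
        2 * C₀ * p.1 ^ (-(b + s)) + C₂ * p.1 ^ (-(c - s)) := by
    have near := eventually_forall_mem_Icc_add_smul (tendsto_rpow_nhdsGT_zero hs) hK
      (EuclideanSpace.single i 1)
      ((Eventually.prod_inr (hΩ.mem_nhdsSet.2 hKΩ) (𝓝[>] 0)).and (hC₀.and hC₂))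
    filter_upwards [near, hu.prod_inl (𝓝ˢ K), Eventually.prod_inl self_mem_nhdsWithin (𝓝ˢ K)]
      with ⟨ε, x⟩ hx huε (hε : 0 < ε)
    have bound := norm_deriv_le_of_norm_le_of_norm_deriv2_le (Real.rpow_pos_of_pos hε s)
      (fun t ht => hasDerivAt_partialDeriv_line hΩ huε hα n (hx t ht).1)
      (fun t ht => hasDerivAt_partialDeriv_line hΩ huε hα (n + 1) (hx t ht).1)
      (fun t ht => (hx t ht).2.1) (fun t ht => (hx t ht).2.2)
    rw [zero_smul, add_zero, Real.norm_of_nonneg (Real.rpow_nonneg hε.le _),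
      Real.norm_of_nonneg (Real.rpow_nonneg hε.le _)] at bound
    refine bound.trans_eq ?_
    rw [neg_add, neg_sub, sub_eq_add_neg s, Real.rpow_add hε, Real.rpow_add hε,
      Real.rpow_neg hε.le s]
    ring
  exact (Asymptotics.IsBigO.of_bound' (landau.mono fun _ hp => hp.trans (le_abs_self _))).trans
    (((isBigO_rpow_neg_prod (le_max_left _ _)).const_mul_left _).add
      ((isBigO_rpow_neg_prod (le_max_right _ _)).const_mul_left _))

end HasGrowth

section GrowthExponent

variable {Ω K L : Set (Euc d)} {α : Fin d → ℕ} {c : ℝ}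

theorem Moderate.eventually_contDiffOn {u : ℝ → Euc d → ℂ} (hu : Moderate Ω u) :
    ∀ᶠ ε in 𝓝[>] 0, ContDiffOn ℝ (⊤ : ℕ∞) (u ε) Ω :=
  mem_of_superset (Ioo_mem_nhdsGT one_pos) hu.1

theorem exists_isCompact_mem_nhdsSet (hΩ : IsOpen Ω) (hK : IsCompact K) (hKΩ : K ⊆ Ω) :
    ∃ L, IsCompact L ∧ L ⊆ Ω ∧ L ∈ 𝓝ˢ K := by
  obtain ⟨L, hL, hKL, hLΩ⟩ := exists_compact_between hK hΩ hKΩ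
  exact ⟨L, hL, hLΩ, subset_interior_iff_mem_nhdsSet.1 hKL⟩

theorem Moderate.exists_hasGrowth {u : ℝ → Euc d → ℂ} (hu : Moderate Ω u) (hΩ : IsOpen Ω)
    (hK : IsCompact K) (hKΩ : K ⊆ Ω) (α : Fin d → ℕ) : ∃ N : ℕ, HasGrowth K α N u := by
  obtain ⟨L, hL, hLΩ, hKL⟩ := exists_isCompact_mem_nhdsSet hΩ hK hKΩ
  obtain ⟨N, hN⟩ := hu.2 L hL hLΩ α
  exact ⟨N, hasGrowth_of_eventually_pSemi_le hΩ hL hLΩ hKL hu.eventually_contDiffOn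
    (smallE_iff_eventually.1 hN)⟩

theorem hasGrowth_iff_of_pSemi_sub_le_one (hΩ : IsOpen Ω) (hL : IsCompact L) (hLΩ : L ⊆ Ω)
    (hKL : L ∈ 𝓝ˢ K) (hc : 0 ≤ c) {v w : ModNet Ω}
    (hvw : ∀ᶠ ε in 𝓝[>] 0, pSemi α L (fun x => v.1 ε x - w.1 ε x) ≤ 1) :
    HasGrowth K α c v.1 ↔ HasGrowth K α c w.1 := by
  have hv := v.2.eventually_contDiffOn
  have hw := w.2.eventually_contDiffOn
  refine hasGrowth_iff_of_hasGrowth_sub hΩ ((subset_of_mem_nhdsSet hKL).trans hLΩ) hv hw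
    (HasGrowth.mono ?_ hc)
  refine hasGrowth_of_eventually_pSemi_le hΩ hL hLΩ hKL (hv.mp (hw.mono fun _ h h' => h'.sub h)) ?_
  filter_upwards [hvw] with ε hε
  rw [neg_zero, Real.rpow_zero]
  exact hε

theorem hasGrowth_iff_of_mk_eq (hΩ : IsOpen Ω) (hK : IsCompact K) (hKΩ : K ⊆ Ω) (hc : 0 ≤ c)
    {v w : ModNet Ω} (hvw : Quot.mk (nulRel Ω) v = Quot.mk (nulRel Ω) w) :
    HasGrowth K α c v.1 ↔ HasGrowth K α c w.1 := by
  obtain ⟨L, hL, hLΩ, hKL⟩ := exists_isCompact_mem_nhdsSet hΩ hK hKΩ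
  induction Quot.eqvGen_exact hvw with
  | rel v w h =>
    refine hasGrowth_iff_of_pSemi_sub_le_one hΩ hL hLΩ hKL hc ?_
    simpa using smallE_iff_eventually.1 (h.2 L hL hLΩ α 0)
  | refl v => rfl
  | symm v w _ ih => exact (ih (Quot.eqvGen_sound ‹_›)).symm
  | trans u v w _ _ ihuv ihvw =>
    exact (ihuv (Quot.eqvGen_sound ‹_›)).trans (ihvw (Quot.eqvGen_sound ‹_›))

/-- The infimum of the exponents `c ≥ 0` such that `∂^α u` grows at most like `ε ^ (-c)` near `K`.
Decay is not recorded: truncating at `0` keeps the infimum finite and makes it insensitive to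
bounded perturbations. -/
def growthExponent (K : Set (Euc d)) (α : Fin d → ℕ) (u : Colombeau Ω) : ℝ :=
  sInf {c | 0 ≤ c ∧ HasGrowth K α c (Quot.out u).1}

theorem growthExponent_nonneg (u : Colombeau Ω) : 0 ≤ growthExponent K α u :=
  Real.sInf_nonneg fun _ hc => hc.1

theorem growthExponent_le {u : Colombeau Ω} (hc : 0 ≤ c) (h : HasGrowth K α c (Quot.out u).1) :
    growthExponent K α u ≤ c :=
  csInf_le ⟨0, fun _ hb => hb.1⟩ ⟨hc, h⟩

theorem hasGrowth_of_growthExponent_lt (hΩ : IsOpen Ω) (hK : IsCompact K) (hKΩ : K ⊆ Ω)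
    {u : Colombeau Ω} (hc : growthExponent K α u < c) : HasGrowth K α c (Quot.out u).1 := by
  obtain ⟨N, hN⟩ := (Quot.out u).2.exists_hasGrowth hΩ hK hKΩ α
  have hne : {b | 0 ≤ b ∧ HasGrowth K α b (Quot.out u).1}.Nonempty := ⟨N, N.cast_nonneg, hN⟩
  obtain ⟨b, ⟨-, hb⟩, hbc⟩ := exists_lt_of_csInf_lt hne hc
  exact hb.mono hbc.le

theorem growthExponent_update_succ_le (hΩ : IsOpen Ω) (hK : IsCompact K) (hKΩ : K ⊆ Ω)
    {i : Fin d} (hα : ∀ j < i, α j = 0) (n : ℕ) (u : Colombeau Ω) :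
    growthExponent K (Function.update α i (n + 1)) u ≤
      max (growthExponent K (Function.update α i n) u)
        ((growthExponent K (Function.update α i n) u +
          growthExponent K (Function.update α i (n + 2)) u) / 2) := by
  set e₀ := growthExponent K (Function.update α i n) u
  set e₂ := growthExponent K (Function.update α i (n + 2)) u
  have he₀ : 0 ≤ e₀ := growthExponent_nonneg u
  refine le_of_forall_pos_le_add fun δ hδ => ?_
  -- The scale `ε ^ s` that balances the two terms of Landau's inequality.
  set s := max 0 ((e₂ - e₀) / 2) + δ / 2 with hs_def
  have hs : 0 < s := by positivity
  have interpolated := ((hasGrowth_of_growthExponent_lt hΩ hK hKΩ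
      (lt_add_of_pos_right e₀ (half_pos hδ))).interpolate hΩ hK hKΩ
    (Quot.out u).2.eventually_contDiffOn hα
    (hasGrowth_of_growthExponent_lt hΩ hK hKΩ (lt_add_of_pos_right e₂ (half_pos hδ))) hs)
  refine growthExponent_le (add_nonneg (le_max_of_le_left he₀) hδ.le) (interpolated.mono ?_)
  have hmid : e₀ + max 0 ((e₂ - e₀) / 2) = max e₀ ((e₀ + e₂) / 2) := by
    rw [← max_add_add_left, add_zero]
    ring_nf
  have hs_ge : (e₂ - e₀) / 2 ≤ max 0 ((e₂ - e₀) / 2) := le_max_right _ _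
  refine max_le (by linarith) ?_
  linarith [le_max_right e₀ ((e₀ + e₂) / 2)]

theorem exists_growthExponent_le_of_mem_GL0Omega (hΩ : IsOpen Ω) (hK : IsCompact K)
    (hKΩ : K ⊆ Ω) {u : Colombeau Ω} (hu : u ∈ GL0Omega Ω) {a : ℝ} (ha : 0 < a) :
    ∃ b, ∀ α : Fin d → ℕ, growthExponent K α u ≤ a * ∑ i, (α i : ℝ) + b := by
  obtain ⟨L, hL, hLΩ, hKL⟩ := exists_isCompact_mem_nhdsSet hΩ hK hKΩ
  obtain ⟨w, hw, a', ha', b, hb⟩ := hu L hL hLΩ a ha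
  refine ⟨max b 0, fun α => ?_⟩
  have horder : 0 ≤ ∑ i, (α i : ℝ) := Finset.sum_nonneg fun i _ => (α i).cast_nonneg
  have hnonneg : 0 ≤ a * ∑ i, (α i : ℝ) + max b 0 :=
    add_nonneg (mul_nonneg ha.le horder) (le_max_right _ _)
  have growth_w : HasGrowth K α (a' * ∑ i, (α i : ℝ) + b) w.1 := by
    refine hasGrowth_of_eventually_pSemi_le hΩ hL hLΩ hKL w.2.eventually_contDiffOn ?_
    simpa only [neg_add'] using smallE_iff_eventually.1 (hb α)
  refine growthExponent_le hnonneg ((hasGrowth_iff_of_mk_eq hΩ hK hKΩ hnonneg ?_).1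
    (growth_w.mono ?_))
  · rw [hw, Quot.out_eq]
  · gcongr
    exact le_max_left _ _

theorem antitone_growthExponent_update (hΩ : IsOpen Ω) (hK : IsCompact K) (hKΩ : K ⊆ Ω)
    {u : Colombeau Ω} (hu : u ∈ GL0Omega Ω) {i : Fin d} (hα : ∀ j < i, α j = 0) :
    Antitone fun n => growthExponent K (Function.update α i n) u := by
  refine antitone_of_le_max_midpoint_of_sublinear
    (fun n => growthExponent_update_succ_le hΩ hK hKΩ hα n u) fun a ha => ?_
  obtain ⟨b, hb⟩ := exists_growthExponent_le_of_mem_GL0Omega hΩ hK hKΩ hu ha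
  refine ⟨a * ∑ j ∈ Finset.univ \ {i}, (α j : ℝ) + b, fun n => (hb _).trans_eq ?_⟩
  have hsum : ∑ j, (Function.update α i n j : ℝ) = n + ∑ j ∈ Finset.univ \ {i}, (α j : ℝ) := by
    exact_mod_cast Finset.sum_update_of_mem (Finset.mem_univ i) α n
  rw [hsum]
  ring

theorem growthExponent_le_growthExponent_zero (hΩ : IsOpen Ω) (hK : IsCompact K) (hKΩ : K ⊆ Ω)
    {u : Colombeau Ω} (hu : u ∈ GL0Omega Ω) (α : Fin d → ℕ) :
    growthExponent K α u ≤ growthExponent K 0 u := by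
  suffices h : ∀ (s : Finset (Fin d)) (α : Fin d → ℕ), (∀ i ∉ s, α i = 0) →
      growthExponent K α u ≤ growthExponent K 0 u from h Finset.univ α (by simp)
  intro s
  induction s using Finset.induction_on_min with
  | empty =>
    intro α hα
    rw [show α = 0 from funext fun i => hα i (Finset.notMem_empty i)]
  | insert i s hi ih =>
    intro α hα
    have hbefore : ∀ j < i, α j = 0 := fun j hj =>
      hα j fun hjs => (Finset.mem_insert.1 hjs).elim hj.ne fun h => (hi j h).not_gt hj
    calc growthExponent K α u = growthExponent K (Function.update α i (α i)) u := by
          rw [Function.update_eq_self]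
      _ ≤ growthExponent K (Function.update α i 0) u :=
          antitone_growthExponent_update hΩ hK hKΩ hu hbefore (Nat.zero_le _)
      _ ≤ growthExponent K 0 u := ih _ fun j hj => by
          rcases eq_or_ne j i with rfl | hji
          · exact Function.update_self ..
          · rw [Function.update_of_ne hji, hα j (by simp [hji, hj])]

end GrowthExponent

section Regularity

variable {Ω K : Set (Euc d)}

theorem GInfOmega_subset_GL0Omega : GInfOmega Ω ⊆ GL0Omega Ω := by
  intro u hu K hK hKΩ a ha
  obtain ⟨w, hw, N, hN⟩ := hu K hK hKΩ
  exact ⟨w, hw, 0, ha, N, fun α => by simpa using hN α⟩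

theorem mem_GInfK_of_growthExponent_le (hΩ : IsOpen Ω) (hK : IsCompact K) (hKΩ : K ⊆ Ω)
    {u : Colombeau Ω} {M : ℝ} (h : ∀ α, growthExponent K α u ≤ M) : u ∈ GInfK Ω K := by
  obtain ⟨N, hN⟩ := exists_nat_gt M
  obtain ⟨c, hMc, hcN⟩ := exists_between hN
  exact ⟨Quot.out u, Quot.out_eq u, N, fun α => smallE_iff_eventually.2
    ((hasGrowth_of_growthExponent_lt hΩ hK hKΩ ((h α).trans_lt hMc)).eventually_pSemi_le hcN)⟩

/-- The generalized functions whose derivatives grow, near every compact subset of `Ω`, at most as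
fast as the functions themselves: the common description of `𝒢^∞(Ω)` and `𝒢^{L,0}(Ω)`. -/
def growthBoundedByZerothOrder (Ω : Set (Euc d)) : Set (Colombeau Ω) :=
  {u | ∀ K, IsCompact K → K ⊆ Ω → ∀ α, growthExponent K α u ≤ growthExponent K 0 u}

theorem GL0Omega_subset_growthBoundedByZerothOrder (hΩ : IsOpen Ω) :
    GL0Omega Ω ⊆ growthBoundedByZerothOrder Ω :=
  fun _ hu _ hK hKΩ α => growthExponent_le_growthExponent_zero hΩ hK hKΩ hu α

theorem growthBoundedByZerothOrder_subset_GInfOmega (hΩ : IsOpen Ω) :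
    growthBoundedByZerothOrder Ω ⊆ GInfOmega Ω :=
  fun _ hu K hK hKΩ => mem_GInfK_of_growthExponent_le hΩ hK hKΩ (hu K hK hKΩ)

end Regularity

section SharpTopology

variable {Ω K L : Set (Euc d)} {α : Fin d → ℕ}

/- For `b < 0` this fails: `(valuation z).toReal = 0` when `valuation z = ⊥`. -/
theorem eventually_norm_le_rpow_of_sharpNorm_lt {z : ℝ → ℂ} {b : ℝ} (hb : 0 ≤ b)
    (h : sharpNorm z < Real.exp (-b)) : ∀ᶠ ε in 𝓝[>] 0, ‖z ε‖ ≤ ε ^ b := by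
  have hval : (b : EReal) < valuation z := by
    unfold sharpNorm at h
    split_ifs at h with htop
    · exact htop ▸ EReal.coe_lt_top b
    · have hlt : b < (valuation z).toReal := neg_lt_neg_iff.1 (Real.exp_lt_exp.1 h)
      have hbot : valuation z ≠ ⊥ := fun hbot => by
        rw [hbot, EReal.toReal_bot] at hlt
        exact hlt.not_ge hb
      rwa [← EReal.coe_toReal htop hbot, EReal.coe_lt_coe_iff]
  obtain ⟨_, ⟨c, hc, rfl⟩, hbc⟩ := lt_sSup_iff.1 hval
  filter_upwards [smallE_iff_eventually.1 hc, Ioo_mem_nhdsGT one_pos] with ε hε hε01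
  exact hε.trans
    (Real.rpow_le_rpow_of_exponent_ge hε01.1 hε01.2.le (EReal.coe_lt_coe_iff.1 hbc).le)

theorem sharpNorm_zero : sharpNorm (fun _ => 0) = 0 := by
  have hval : valuation (fun _ => 0) = ⊤ := by
    refine EReal.eq_top_iff_forall_lt _ |>.2 fun y => ?_
    refine (EReal.coe_lt_coe_iff.2 (lt_add_one y)).trans_le (le_sSup ⟨y + 1, ?_, rfl⟩)
    exact ⟨1, one_pos, fun ε hε _ => by simpa using Real.rpow_nonneg hε.le _⟩
  exact if_pos hval

theorem PNormDiff_self (u : Colombeau Ω) : PNormDiff Ω α K u u = 0 := by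
  have hzero : (fun _ : Euc d => (0 : ℂ)) = 0 := rfl
  simp only [PNormDiff, sub_self, hzero, pSemi_zero, Complex.ofReal_zero, sharpNorm_zero]

theorem eventually_pSemi_sub_le_one_of_PNormDiff_lt_one {u v : Colombeau Ω}
    (h : PNormDiff Ω α K u v < 1) : ∀ᶠ ε in 𝓝[>] 0,
      pSemi α K (fun x => (Quot.out u).1 ε x - (Quot.out v).1 ε x) ≤ 1 := by
  rw [← Real.exp_zero, ← neg_zero] at h
  filter_upwards [eventually_norm_le_rpow_of_sharpNorm_lt le_rfl h] with ε hε
  rw [Complex.norm_real, Real.rpow_zero] at hε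
  exact (le_abs_self _).trans hε

theorem growthExponent_eq_of_PNormDiff_lt_one (hΩ : IsOpen Ω) (hL : IsCompact L) (hLΩ : L ⊆ Ω)
    (hKL : L ∈ 𝓝ˢ K) {u v : Colombeau Ω} (h : PNormDiff Ω α L u v < 1) :
    growthExponent K α v = growthExponent K α u := by
  unfold growthExponent
  congr 1
  ext c
  exact and_congr_right fun hc => (hasGrowth_iff_of_pSemi_sub_le_one hΩ hL hLΩ hKL hc
    (eventually_pSemi_sub_le_one_of_PNormDiff_lt_one h)).symm

theorem continuous_growthExponent (hΩ : IsOpen Ω) (hK : IsCompact K) (hKΩ : K ⊆ Ω)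
    (α : Fin d → ℕ) :
    Continuous[sharpTopology Ω, inferInstance] (growthExponent (Ω := Ω) K α) := by
  let _ := sharpTopology Ω
  obtain ⟨L, hL, hLΩ, hKL⟩ := exists_isCompact_mem_nhdsSet hΩ hK hKΩ
  refine IsLocallyConstant.continuous ((IsLocallyConstant.iff_exists_open _).2 fun u => ?_)
  refine ⟨{v | PNormDiff Ω α L u v < 1}, ?_, ?_, fun v hv =>
    growthExponent_eq_of_PNormDiff_lt_one hΩ hL hLΩ hKL hv⟩
  · exact TopologicalSpace.isOpen_generateFrom_of_mem ⟨u, α, L, 1, hL, hLΩ, one_pos, rfl⟩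
  · exact (PNormDiff_self u).trans_lt one_pos

theorem isClosed_growthBoundedByZerothOrder (hΩ : IsOpen Ω) :
    IsClosed[sharpTopology Ω] (growthBoundedByZerothOrder Ω) := by
  let _ := sharpTopology Ω
  simp only [growthBoundedByZerothOrder, ofPred_forall]
  exact isClosed_iInter fun K => isClosed_iInter fun hK => isClosed_iInter fun hKΩ =>
    isClosed_iInter fun α => isClosed_le (continuous_growthExponent hΩ hK hKΩ α)
      (continuous_growthExponent hΩ hK hKΩ 0)

end SharpTopology

/-- 𝒢^∞(Ω) = 𝒢^{L,0}(Ω), and this set is closed in the sharp topology. -/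
theorem GInfOmega_eq_GL0Omega_and_isClosed {d : ℕ} (Ω : Set (Euc d)) (hΩ : IsOpen Ω) :
    GInfOmega Ω = GL0Omega Ω ∧
      @IsClosed (Colombeau Ω) (sharpTopology Ω) (GInfOmega Ω) := by
  have hGL0 := GL0Omega_subset_growthBoundedByZerothOrder hΩ
  have hGInf := growthBoundedByZerothOrder_subset_GInfOmega hΩ
  have heq : GInfOmega Ω = growthBoundedByZerothOrder Ω :=
    (GInfOmega_subset_GL0Omega.trans hGL0).antisymm hGInf
  refine ⟨GInfOmega_subset_GL0Omega.antisymm (hGL0.trans hGInf), ?_⟩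
  rw [heq]
  exact isClosed_growthBoundedByZerothOrder hΩ

end
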